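/- arXiv:1710.06517 — 4 statements merged into one kernel-verified Lean document; each statement's English description precedes it below -/
import Mathlib

section
/- Let 0 ≤ k ≤ n. The elementary symmetric polynomial e_k in n variables, evaluated at the geometric progression a^{n−1}, a^{n−2}b, …, ab^{n−2}, b^{n−1}, equals (ab)^{k(k−1)/2} · P(a+b, −ab) in ℤ[a,b], where P ∈ ℤ[s,t] is the Fibonomial polynomial, i.e. the unique polynomial with P·{k}!_{s,t}·{n−k}!_{s,t} = {n}!_{s,t}. -/
open MvPolynomial

/-- The generalized Fibonacci polynomials `{m}_{s,t} ∈ ℤ[s,t]`, with `s = X 0`, `t = X 1`. -/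
noncomputable def gfib : ℕ → MvPolynomial (Fin 2) ℤ
  | 0 => 0
  | 1 => 1
  | (m + 2) => X 0 * gfib (m + 1) + X 1 * gfib m

/-- The Fibonacci factorial `{m}!_{s,t}`. -/
noncomputable def gfibFact : ℕ → MvPolynomial (Fin 2) ℤ
  | 0 => 1
  | (m + 1) => gfib (m + 1) * gfibFact m

/-!
The progression `a^n, a^(n-1) b, …, b^n` is `b^n` together with `a` times its predecessor. Taking
sums, this gives the addition law `[m+n] = a^m [n] + b^n [m]` for `[m] = a^(m-1) + ⋯ + b^(m-1)`;
taking elementary symmetric functions, it gives a Pascal recurrence, which with the addition law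
yields `e_k [k]! [n-k]! = (ab)^(k choose 2) [n]!` over any commutative semiring. The `[m]` are the
`{m}` specialized at `s = a + b`, `t = -ab`, and `[m]!` does not vanish in `ℤ[a,b]` because it
becomes `m!` at `a = b = 1`, so the factorials can be cancelled.
-/

section Semiring

variable {R S : Type*} [CommSemiring R] [CommSemiring S]

theorem esymm_zero_right (s : Multiset R) : s.esymm 0 = 1 := by
  simp [Multiset.esymm]

theorem esymm_eq_zero_of_card_lt {s : Multiset R} {k : ℕ} (h : s.card < k) : s.esymm k = 0 := by
  simp [Multiset.esymm, Multiset.powersetCard_eq_empty k h]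

theorem esymm_cons_succ (x : R) (s : Multiset R) (k : ℕ) :
    (x ::ₘ s).esymm (k + 1) = s.esymm (k + 1) + x * s.esymm k := by
  simp [Multiset.esymm, Multiset.powersetCard_cons, Multiset.sum_map_mul_left]

/-- The geometric progression `a^(n-1), a^(n-2) b, …, b^(n-1)` of length `n`, as a multiset. -/
def geomProgression (a b : R) (n : ℕ) : Multiset R :=
  (Multiset.range n).map fun i ↦ a ^ (n - 1 - i) * b ^ i

/-- The `(a, b)`-analogue `[n] = a^(n-1) + a^(n-2) b + ⋯ + b^(n-1)` of the natural number `n`. -/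
def pqNat (a b : R) (n : ℕ) : R :=
  (geomProgression a b n).sum

/-- The `(a, b)`-analogue `[n]! = [1] [2] ⋯ [n]` of the factorial of `n`. -/
def pqFactorial (a b : R) (n : ℕ) : R :=
  ∏ i ∈ Finset.range n, pqNat a b (i + 1)

theorem card_geomProgression (a b : R) (n : ℕ) : (geomProgression a b n).card = n := by
  simp [geomProgression]

theorem geomProgression_succ (a b : R) (n : ℕ) :
    geomProgression a b (n + 1) = b ^ n ::ₘ (geomProgression a b n).map (a * ·) := by
  have factor_out : ∀ i ∈ Multiset.range n,
      a ^ (n + 1 - 1 - i) * b ^ i = a * (a ^ (n - 1 - i) * b ^ i) := by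
    intro i hi
    rw [Multiset.mem_range] at hi
    rw [← mul_assoc, ← pow_succ', show n - 1 - i + 1 = n + 1 - 1 - i by lia]
  rw [geomProgression, Multiset.range_succ, Multiset.map_cons, Multiset.map_congr rfl factor_out,
    geomProgression, Multiset.map_map]
  simp

theorem map_univ_eq_geomProgression (a b : R) (n : ℕ) :
    (Finset.univ : Finset (Fin n)).val.map (fun i : Fin n ↦ a ^ (n - 1 - (i : ℕ)) * b ^ (i : ℕ)) =
      geomProgression a b n := by
  rw [geomProgression, ← Finset.range_val, ← Nat.Iio_eq_range, ← Fin.map_valEmbedding_univ,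
    Finset.map_val, Multiset.map_map]
  rfl

theorem pqNat_zero (a b : R) : pqNat a b 0 = 0 := by
  simp [pqNat, geomProgression]

theorem pqNat_succ (a b : R) (n : ℕ) : pqNat a b (n + 1) = b ^ n + a * pqNat a b n := by
  rw [pqNat, pqNat, geomProgression_succ, Multiset.sum_cons, Multiset.sum_map_mul_left,
    Multiset.map_id']

theorem pqNat_add (a b : R) (m n : ℕ) :
    pqNat a b (m + n) = a ^ m * pqNat a b n + b ^ n * pqNat a b m := by
  induction m with
  | zero => simp [pqNat_zero]
  | succ m ih => rw [Nat.add_right_comm, pqNat_succ, pqNat_succ, ih]; ring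

theorem pqNat_one_one (n : ℕ) : pqNat (1 : R) 1 n = n := by
  simp [pqNat, geomProgression]

theorem map_pqNat (f : R →+* S) (a b : R) (n : ℕ) :
    f (pqNat a b n) = pqNat (f a) (f b) n := by
  simp [pqNat, geomProgression, map_multiset_sum]

theorem pqFactorial_zero (a b : R) : pqFactorial a b 0 = 1 :=
  Finset.prod_range_zero _

theorem pqFactorial_succ (a b : R) (n : ℕ) :
    pqFactorial a b (n + 1) = pqNat a b (n + 1) * pqFactorial a b n :=
  Finset.prod_range_succ_comm _ _

theorem pqFactorial_one_one (n : ℕ) : pqFactorial (1 : R) 1 n = n.factorial := by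
  simp only [pqFactorial, pqNat_one_one, ← Nat.cast_prod, Finset.prod_range_add_one_eq_factorial]

theorem map_pqFactorial (f : R →+* S) (a b : R) (n : ℕ) :
    f (pqFactorial a b n) = pqFactorial (f a) (f b) n := by
  simp only [pqFactorial, map_prod, map_pqNat]

theorem pqFactorial_X_ne_zero {σ : Type*} [CharZero R] (i j : σ) (n : ℕ) :
    pqFactorial (X i : MvPolynomial σ R) (X j) n ≠ 0 := by
  intro h
  have eval_one : eval (fun _ ↦ (1 : R)) (pqFactorial (X i) (X j) n) = n.factorial := by
    rw [map_pqFactorial, eval_X, eval_X, pqFactorial_one_one]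
  rw [h, map_zero] at eval_one
  exact n.factorial_ne_zero (Nat.cast_eq_zero.mp eval_one.symm)

theorem esymm_geomProgression_succ (a b : R) (n k : ℕ) :
    (geomProgression a b (n + 1)).esymm (k + 1) =
      a ^ (k + 1) * (geomProgression a b n).esymm (k + 1) +
        a ^ k * b ^ n * (geomProgression a b n).esymm k := by
  have esymm_map_mul (l : ℕ) : ((geomProgression a b n).map (a * ·)).esymm l =
      a ^ l * (geomProgression a b n).esymm l :=
    (Multiset.pow_smul_esymm a l _).symm
  rw [geomProgression_succ, esymm_cons_succ, esymm_map_mul, esymm_map_mul]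
  ring

theorem esymm_geomProgression_self (a b : R) (n : ℕ) :
    (geomProgression a b n).esymm n = (a * b) ^ n.choose 2 := by
  induction n with
  | zero => simp [esymm_zero_right]
  | succ n ih =>
    rw [esymm_geomProgression_succ, esymm_eq_zero_of_card_lt (by simp [card_geomProgression]), ih,
      Nat.choose_succ_succ' n 1, Nat.choose_one_right]
    ring

theorem esymm_geomProgression_mul_pqFactorial (a b : R) (k j : ℕ) :
    (geomProgression a b (k + j)).esymm k * pqFactorial a b k * pqFactorial a b j =
      (a * b) ^ k.choose 2 * pqFactorial a b (k + j) := by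
  induction k generalizing j with
  | zero => simp [esymm_zero_right, pqFactorial_zero]
  | succ k ihk =>
    induction j with
    | zero => simp [esymm_geomProgression_self, pqFactorial_zero]
    | succ j ihj =>
      rw [Nat.add_right_comm] at ihj
      specialize ihk (j + 1)
      rw [← Nat.add_assoc] at ihk
      have index_eq : k + 1 + (j + 1) = k + j + 1 + 1 := by lia
      calc
        _ = a ^ (k + 1) * pqNat a b (j + 1) * ((geomProgression a b (k + j + 1)).esymm (k + 1) *
                pqFactorial a b (k + 1) * pqFactorial a b j) +
              a ^ k * b ^ (k + j + 1) * pqNat a b (k + 1) *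
                ((geomProgression a b (k + j + 1)).esymm k * pqFactorial a b k *
                  pqFactorial a b (j + 1)) := by
          rw [index_eq, esymm_geomProgression_succ, pqFactorial_succ a b k,
            pqFactorial_succ a b j]
          ring
        _ = a ^ (k + 1) * pqNat a b (j + 1) *
                ((a * b) ^ (k + 1).choose 2 * pqFactorial a b (k + j + 1)) +
              a ^ k * b ^ (k + j + 1) * pqNat a b (k + 1) *
                ((a * b) ^ k.choose 2 * pqFactorial a b (k + j + 1)) := by
          rw [ihj, ihk]
        _ = (a * b) ^ (k + 1).choose 2 *
              (a ^ (k + 1) * pqNat a b (j + 1) + b ^ (j + 1) * pqNat a b (k + 1)) *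
                pqFactorial a b (k + j + 1) := by
          rw [Nat.choose_succ_succ' k 1, Nat.choose_one_right]
          ring
        _ = (a * b) ^ (k + 1).choose 2 * pqFactorial a b (k + 1 + (j + 1)) := by
          rw [← pqNat_add, index_eq, pqFactorial_succ a b (k + j + 1), mul_assoc]

end Semiring

section Ring

-- `Algebra ℤ R` is left arbitrary: for `R = MvPolynomial σ ℤ`, instance search finds
-- `MvPolynomial.algebra`, which `rw` does not identify with `Ring.toIntAlgebra`.
variable {R : Type*} [CommRing R] [Algebra ℤ R]

theorem aeval_gfib (a b : R) (m : ℕ) :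
    aeval ![a + b, -(a * b)] (gfib m) = pqNat a b m := by
  induction m using Nat.twoStepInduction with
  | zero => simp [gfib, pqNat_zero]
  | one => simp [gfib, pqNat_succ, pqNat_zero]
  | more m ih₀ ih₁ =>
    have lucas_recurrence :
        pqNat a b (m + 2) = (a + b) * pqNat a b (m + 1) + -(a * b) * pqNat a b m := by
      rw [pqNat_succ a b (m + 1), pqNat_succ a b m]
      ring
    simp [gfib, ih₀, ih₁, lucas_recurrence]

theorem aeval_gfibFact (a b : R) (m : ℕ) :
    aeval ![a + b, -(a * b)] (gfibFact m) = pqFactorial a b m := by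
  induction m with
  | zero => rw [gfibFact, map_one, pqFactorial_zero]
  | succ m ih => rw [gfibFact, map_mul, aeval_gfib, ih, pqFactorial_succ]

end Ring

/-- The elementary symmetric polynomial `e_k` in `n` variables, evaluated at the geometric
progression `a^{n-1}, a^{n-2}b, …, b^{n-1}`, equals `(ab)^{k(k-1)/2} · P(a+b, -ab)` where
`P` is the Fibonomial polynomial of type `(n, k)`. -/
theorem esymm_geometric_eq_fibonomial (n k : ℕ) (hk : k ≤ n)
    (P : MvPolynomial (Fin 2) ℤ)
    (hP : P * gfibFact k * gfibFact (n - k) = gfibFact n) :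
    aeval (fun i : Fin n => (X 0 : MvPolynomial (Fin 2) ℤ) ^ (n - 1 - (i : ℕ)) * X 1 ^ (i : ℕ))
        (esymm (Fin n) ℤ k)
      = (X 0 * X 1) ^ (k * (k - 1) / 2) *
          aeval ![(X 0 + X 1 : MvPolynomial (Fin 2) ℤ), -(X 0 * X 1)] P := by
  obtain ⟨j, rfl⟩ := Nat.exists_eq_add_of_le hk
  rw [aeval_esymm_eq_multiset_esymm, map_univ_eq_geomProgression, ← Nat.choose_two_right]
  have hPab := congrArg (aeval ![(X 0 + X 1 : MvPolynomial (Fin 2) ℤ), -(X 0 * X 1)]) hP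
  simp only [Nat.add_sub_cancel_left, map_mul, aeval_gfibFact] at hPab
  refine mul_right_cancel₀ (pqFactorial_X_ne_zero 0 1 k)
    (mul_right_cancel₀ (pqFactorial_X_ne_zero 0 1 j) ?_)
  rw [esymm_geomProgression_mul_pqFactorial, ← hPab]
  ring
end

section
/- (Dihedral sieving for k-multisubsets.) Let n be odd, k ≥ 0, let P ∈ ℤ[s,t] be the unique polynomial with P·{k}!_{s,t}·{n−1}!_{s,t} = {n+k−1}!_{s,t}, and let ζ = exp(2πi/n) ∈ ℂ. Then for every integer ℓ, P(ζ^ℓ + ζ^{−ℓ}, −1) equals the number of multisets M of elements of ℤ/nℤ of cardinality k (counted with multiplicity) such that the multiset image of M under x ↦ x+ℓ equals M; and P(0, 1) equals the number of such multisets M whose multiset image under x ↦ −x equals M. -/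
open MvPolynomial

/-- The primitive `n`-th root of unity `ζ = exp(2πi/n)`. -/
noncomputable def primRoot (n : ℕ) : ℂ := Complex.exp (2 * Real.pi * Complex.I / n)

/-!
Substituting `s = a + b`, `t = -ab` turns the Fibonomial polynomial of type `(n+k, k)` into the
complete homogeneous symmetric polynomial `hₖ(aⁿ, aⁿ⁻¹b, …, bⁿ)`, because both satisfy the same
Pascal recursion; it is thus the coefficient of `zᵏ` in `∏ 1 / (1 - aⁱbʲz)`, over `i + j = n`.
A multiset is fixed by a permutation when its multiplicities are constant on cycles, so fixed
`k`-multisets are counted by the coefficient of `zᵏ` in `∏ 1 / (1 - z^|O|)`, over the cycles `O`.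

It remains to compare the two denominators for a permutation of `n + 1` points, `n + 1` odd.
For a translation of order `m`, take `a = q` and `b = q⁻¹` with `q` a primitive `m`-th root of
unity: `m` is odd, so `q²` is one too, and both denominators are `(1 - zᵐ)^((n+1)/m)`. For a
reflection, take `a = -1` and `b = 1`: both denominators are `(1 - z)(1 - z²)^(n/2)`.
-/

open Finset
open scoped PowerSeries

section Specialization

variable {R S : Type*} [CommRing R] [CommRing S]

/-- The specialization `s = a + b`, `t = -ab` of `ℤ[s,t]`, for which `a` and `b` are the roots of
the characteristic polynomial `z² - sz - t` of the recursion for `{m}_{s,t}`. -/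
noncomputable def evalRoots (a b : R) : MvPolynomial (Fin 2) ℤ →ₐ[ℤ] R :=
  aeval ![a + b, -(a * b)]

theorem evalRoots_comm (a b : R) : evalRoots a b = evalRoots b a := by
  rw [evalRoots, evalRoots, add_comm a b, mul_comm a b]

theorem map_evalRoots (φ : R →+* S) (a b : R) (P : MvPolynomial (Fin 2) ℤ) :
    φ (evalRoots a b P) = evalRoots (φ a) (φ b) P := by
  have : φ.toIntAlgHom.comp (evalRoots a b) = evalRoots (φ a) (φ b) := by
    ext i
    fin_cases i <;> simp [evalRoots]
  exact DFunLike.congr_fun this P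

theorem evalRoots_gfib_add_two (a b : R) (m : ℕ) :
    evalRoots a b (gfib (m + 2)) =
      (a + b) * evalRoots a b (gfib (m + 1)) - a * b * evalRoots a b (gfib m) := by
  rw [gfib]
  simp [evalRoots, sub_eq_add_neg]

theorem evalRoots_gfib_succ (a b : R) (m : ℕ) :
    evalRoots a b (gfib (m + 1)) = a * evalRoots a b (gfib m) + b ^ m := by
  induction m with
  | zero => simp [gfib]
  | succ m ih =>
    rw [evalRoots_gfib_add_two, pow_succ]
    linear_combination b * ih

theorem evalRoots_gfib_add (a b : R) (m n : ℕ) :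
    evalRoots a b (gfib (m + n)) =
      a ^ m * evalRoots a b (gfib n) + b ^ n * evalRoots a b (gfib m) := by
  induction n with
  | zero => simp [gfib]
  | succ n ih =>
    rw [← add_assoc, evalRoots_comm, evalRoots_gfib_succ, evalRoots_gfib_succ b a n,
      evalRoots_comm b a, ih]
    ring

theorem evalRoots_one_zero_gfibFact (m : ℕ) : evalRoots (1 : R) 0 (gfibFact m) = 1 := by
  induction m with
  | zero => simp [gfibFact]
  | succ m ih => rw [gfibFact, map_mul, ih, evalRoots_comm, evalRoots_gfib_succ]; simp

theorem evalRoots_X_X_gfibFact_ne_zero (m : ℕ) :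
    evalRoots (X 0 : MvPolynomial (Fin 2) ℤ) (X 1) (gfibFact m) ≠ 0 := by
  intro h
  have := congrArg (eval ![(1 : ℤ), 0]) h
  rw [map_evalRoots] at this
  simp [evalRoots_one_zero_gfibFact] at this

end Specialization

section CompleteHomogeneous

variable {R S : Type*} [CommRing R] [CommRing S]

theorem mk_pow_mul_one_sub_C_mul_X (c : R) :
    PowerSeries.mk (c ^ ·) * (1 - PowerSeries.C c * PowerSeries.X) = 1 := by
  have h := congrArg (PowerSeries.rescale c) (PowerSeries.mk_one_mul_one_sub_eq_one R)
  rw [map_mul, map_sub, map_one, PowerSeries.rescale_X, PowerSeries.rescale_mk] at h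
  simpa using h

/-- The generating series `∑ₖ hₖ zᵏ` of the complete homogeneous symmetric polynomials `hₖ`
evaluated at the `n + 1` monomials `aⁱbʲ` with `i + j = n`. -/
noncomputable def hsymmSeries (a b : R) (n : ℕ) : R⟦X⟧ :=
  ∏ p ∈ antidiagonal n, PowerSeries.mk ((a ^ p.1 * b ^ p.2) ^ ·)

theorem hsymmSeries_mul_prod_one_sub (a b : R) (n : ℕ) :
    hsymmSeries a b n *
      ∏ p ∈ antidiagonal n, (1 - PowerSeries.C (a ^ p.1 * b ^ p.2) * PowerSeries.X) = 1 := by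
  rw [hsymmSeries, ← prod_mul_distrib]
  exact prod_eq_one fun p _ ↦ mk_pow_mul_one_sub_C_mul_X _

theorem map_hsymmSeries (φ : R →+* S) (a b : R) (n : ℕ) :
    PowerSeries.map φ (hsymmSeries a b n) = hsymmSeries (φ a) (φ b) n := by
  simp only [hsymmSeries, map_prod]
  refine prod_congr rfl fun p _ ↦ ?_
  ext k
  simp

theorem coeff_zero_hsymmSeries (a b : R) (n : ℕ) :
    PowerSeries.coeff 0 (hsymmSeries a b n) = 1 := by
  simp [hsymmSeries, map_prod]

theorem coeff_hsymmSeries_zero (a b : R) (k : ℕ) :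
    PowerSeries.coeff k (hsymmSeries a b 0) = 1 := by
  simp [hsymmSeries]

theorem one_sub_mul_hsymmSeries_succ (a b : R) (n : ℕ) :
    (1 - PowerSeries.C (a ^ (n + 1)) * PowerSeries.X) * hsymmSeries a b (n + 1) =
      PowerSeries.rescale b (hsymmSeries a b n) := by
  have hrescale : PowerSeries.rescale b (hsymmSeries a b n) =
      ∏ p ∈ antidiagonal n, PowerSeries.mk ((a ^ p.1 * b ^ (p.2 + 1)) ^ ·) := by
    rw [hsymmSeries, map_prod]
    refine prod_congr rfl fun p _ ↦ ?_
    ext k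
    simp only [PowerSeries.coeff_rescale, PowerSeries.coeff_mk]
    ring
  rw [hsymmSeries, Nat.prod_antidiagonal_succ', pow_zero, mul_one, ← mul_assoc,
    mul_comm (1 - _), mk_pow_mul_one_sub_C_mul_X, one_mul, hrescale]

theorem coeff_succ_hsymmSeries_succ (a b : R) (n k : ℕ) :
    PowerSeries.coeff (k + 1) (hsymmSeries a b (n + 1)) =
      a ^ (n + 1) * PowerSeries.coeff k (hsymmSeries a b (n + 1)) +
        b ^ (k + 1) * PowerSeries.coeff (k + 1) (hsymmSeries a b n) := by
  have h := congrArg (PowerSeries.coeff (k + 1)) (one_sub_mul_hsymmSeries_succ a b n)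
  rw [sub_mul, one_mul, map_sub, mul_assoc, PowerSeries.coeff_C_mul,
    PowerSeries.coeff_succ_X_mul, PowerSeries.coeff_rescale] at h
  linear_combination h

theorem coeff_hsymmSeries_mul_gfibFact (a b : R) (n k : ℕ) :
    PowerSeries.coeff k (hsymmSeries a b n) * evalRoots a b (gfibFact k) *
      evalRoots a b (gfibFact n) = evalRoots a b (gfibFact (n + k)) := by
  induction n generalizing k with
  | zero => simp [coeff_hsymmSeries_zero, gfibFact]
  | succ n ihn =>
    induction k with
    | zero => simp [coeff_zero_hsymmSeries, gfibFact]
    | succ k ihk =>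
      have hn := ihn (k + 1)
      rw [show n + (k + 1) = n + 1 + k by ring] at hn
      rw [coeff_succ_hsymmSeries_succ, ← add_assoc (n + 1)]
      simp only [gfibFact, map_mul] at ihk hn ⊢
      rw [add_assoc (n + 1), evalRoots_gfib_add a b (n + 1) (k + 1)]
      linear_combination a ^ (n + 1) * evalRoots a b (gfib (k + 1)) * ihk +
        b ^ (k + 1) * evalRoots a b (gfib (n + 1)) * hn

theorem evalRoots_eq_coeff_hsymmSeries {P : MvPolynomial (Fin 2) ℤ} {n k : ℕ}
    (hP : P * gfibFact k * gfibFact n = gfibFact (n + k)) (a b : R) :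
    evalRoots a b P = PowerSeries.coeff k (hsymmSeries a b n) := by
  have generic : evalRoots (X 0 : MvPolynomial (Fin 2) ℤ) (X 1) P =
      PowerSeries.coeff k (hsymmSeries (X 0) (X 1) n) := by
    apply mul_right_cancel₀ (evalRoots_X_X_gfibFact_ne_zero k)
    apply mul_right_cancel₀ (evalRoots_X_X_gfibFact_ne_zero n)
    rw [coeff_hsymmSeries_mul_gfibFact, ← hP, map_mul, map_mul]
  have h := congrArg (aeval (R := ℤ) ![a, b]).toRingHom generic
  rw [map_evalRoots, ← PowerSeries.coeff_map, map_hsymmSeries] at h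
  simpa using h

end CompleteHomogeneous

section LinearEquations

variable {R ι : Type*} [CommRing R] [Fintype ι]

theorem expand_mk_one_mul_one_sub_X_pow {w : ℕ} (hw : w ≠ 0) :
    PowerSeries.expand w hw (PowerSeries.mk 1 : R⟦X⟧) * (1 - PowerSeries.X ^ w) = 1 := by
  simpa using congrArg (PowerSeries.expand w hw) (PowerSeries.mk_one_mul_one_sub_eq_one R)

theorem coeff_prod_expand_mk_one [DecidableEq ι] {w : ι → ℕ} (hw : ∀ i, w i ≠ 0) (k : ℕ) :
    PowerSeries.coeff k (∏ i, PowerSeries.expand (w i) (hw i) (PowerSeries.mk 1 : R⟦X⟧)) =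
      (#{l ∈ finsuppAntidiag univ k | ∀ i, w i ∣ l i} : R) := by
  simp only [PowerSeries.coeff_prod, PowerSeries.coeff_expand, PowerSeries.coeff_mk,
    Pi.one_apply, prod_boole, sum_boole, mem_univ, true_imp_iff]

theorem card_filter_dvd_finsuppAntidiag [DecidableEq ι] {w : ι → ℕ} (hw : ∀ i, w i ≠ 0) (k : ℕ) :
    #{l ∈ finsuppAntidiag univ k | ∀ i, w i ∣ l i} =
      Nat.card {h : ι → ℕ // ∑ i, w i * h i = k} := by
  symm
  refine (Nat.card_eq_of_bijective
    (fun h : {h : ι → ℕ // ∑ i, w i * h i = k} ↦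
      (⟨Finsupp.equivFunOnFinite.symm (w * h), by simpa using h.2⟩ :
        {l // l ∈ ({l ∈ finsuppAntidiag univ k | ∀ i, w i ∣ l i} : Finset _)})) ⟨?_, ?_⟩).trans
    (Nat.subtype_card _ fun _ ↦ Iff.rfl)
  · rintro ⟨h₁, _⟩ ⟨h₂, _⟩ h
    ext i
    have := DFunLike.congr_fun (congrArg Subtype.val h) i
    simpa [hw i] using this
  · rintro ⟨l, hl⟩
    simp only [mem_filter, mem_finsuppAntidiag] at hl
    choose h hh using hl.2
    refine ⟨⟨h, ?_⟩, ?_⟩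
    · rw [← hl.1.1]
      exact sum_congr rfl fun i _ ↦ (hh i).symm
    · ext i
      simp [hh]

theorem mk_card_solutions_mul_prod {w : ι → ℕ} (hw : ∀ i, w i ≠ 0) :
    PowerSeries.mk (fun k ↦ (Nat.card {h : ι → ℕ // ∑ i, w i * h i = k} : R)) *
      ∏ i, (1 - PowerSeries.X ^ w i) = 1 := by
  classical
  have hprod : PowerSeries.mk (fun k ↦ (Nat.card {h : ι → ℕ // ∑ i, w i * h i = k} : R)) =
      ∏ i, PowerSeries.expand (w i) (hw i) (PowerSeries.mk 1) := by
    ext k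
    rw [PowerSeries.coeff_mk, coeff_prod_expand_mk_one, card_filter_dvd_finsuppAntidiag hw]
  rw [hprod, ← prod_mul_distrib]
  exact prod_eq_one fun i _ ↦ expand_mk_one_mul_one_sub_X_pow (hw i)

end LinearEquations

section Cycles

variable {Y : Type*}

/-- The cycles of a permutation, fixed points included, as the orbits of the cyclic group it
generates. -/
abbrev Cycles (f : Equiv.Perm Y) : Type _ :=
  MulAction.orbitRel.Quotient (Subgroup.zpowers f) Y

noncomputable instance [Finite Y] (f : Equiv.Perm Y) : Fintype (Cycles f) :=
  Fintype.ofFinite _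

theorem cycles_mk_apply (f : Equiv.Perm Y) (x : Y) :
    (Quotient.mk'' (f x) : Cycles f) = Quotient.mk'' x :=
  MulAction.orbitRel.Quotient.quotient_smul_eq
    (g := (⟨f, Subgroup.mem_zpowers f⟩ : Subgroup.zpowers f))

variable {f : Equiv.Perm Y}

theorem apply_eq_of_mk_cycles_eq {α : Type*} {g : Y → α} (hg : g ∘ f = g) {x y : Y}
    (hxy : (Quotient.mk'' x : Cycles f) = Quotient.mk'' y) : g x = g y := by
  have hpow (m : ℕ) (z : Y) : g ((f ^ m) z) = g z := by
    rw [Equiv.Perm.coe_pow]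
    exact congrFun (Function.iterate_invariant hg m) z
  obtain ⟨⟨_, i, rfl⟩, hi⟩ := Quotient.eq''.mp hxy
  change (f ^ i) y = x at hi
  obtain ⟨m, rfl | rfl⟩ := i.eq_nat_or_neg
  · rw [← hi, zpow_natCast, hpow]
  · rw [zpow_neg, zpow_natCast, Equiv.Perm.inv_eq_iff_eq] at hi
    rw [hi, hpow]

theorem bijective_comp_mk_cycles (α : Type*) :
    Function.Bijective fun h : Cycles f → α ↦
      (⟨fun x ↦ h (Quotient.mk'' x), funext fun x ↦ congrArg h (cycles_mk_apply f x)⟩ :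
        {g : Y → α // g ∘ f = g}) := by
  constructor
  · intro h₁ h₂ h
    exact funext fun O ↦ Quotient.inductionOn' O (congrFun (congrArg Subtype.val h))
  · rintro ⟨g, hg⟩
    exact ⟨fun O ↦ O.liftOn' g fun x y hxy ↦
      apply_eq_of_mk_cycles_eq hg (Quotient.eq''.mpr hxy), rfl⟩

theorem map_eq_self_iff_count_comp [DecidableEq Y] {M : Multiset Y} :
    M.map f = M ↔ (fun x ↦ M.count x) ∘ f = fun x ↦ M.count x := by
  have hcount (x : Y) : (M.map f).count (f x) = M.count x :=
    Multiset.count_map_eq_count' f M f.injective x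
  rw [Multiset.ext, f.surjective.forall (p := fun y ↦ (M.map f).count y = M.count y), funext_iff]
  simp only [hcount, Function.comp_apply, eq_comm]

variable (f)

theorem card_orbit_mk [Finite Y] (x : Y) :
    Nat.card (MulAction.orbitRel.Quotient.orbit (Quotient.mk'' x : Cycles f)) =
      Function.minimalPeriod f x := by
  have : Fintype (MulAction.orbit (Subgroup.zpowers f) x) := Fintype.ofFinite _
  rw [MulAction.orbitRel.Quotient.orbit_mk, Nat.card_eq_fintype_card]
  exact (MulAction.minimalPeriod_eq_card (a := f) (b := x)).symm

theorem card_orbit_ne_zero [Finite Y] (O : Cycles f) : Nat.card O.orbit ≠ 0 := by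
  induction O using Quotient.inductionOn' with
  | h x =>
    have : Nonempty (MulAction.orbit (Subgroup.zpowers f) x) :=
      (MulAction.nonempty_orbit x).to_subtype
    exact (Nat.card_pos (α := MulAction.orbit (Subgroup.zpowers f) x)).ne'

theorem sum_comp_mk_cycles [Fintype Y] (h : Cycles f → ℕ) :
    ∑ x, h (Quotient.mk'' x) = ∑ O : Cycles f, Nat.card O.orbit * h O := by
  classical
  rw [← sum_fiberwise univ (Quotient.mk'' : Y → Cycles f)]
  refine sum_congr rfl fun O _ ↦ ?_
  rw [sum_congr rfl fun x hx ↦ by rw [(mem_filter.mp hx).2], sum_const, smul_eq_mul,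
    ← Fintype.card_subtype, ← Nat.card_eq_fintype_card]
  simp only [← MulAction.orbitRel.Quotient.mem_orbit]

theorem sum_card_orbit_cycles [Fintype Y] :
    ∑ O : Cycles f, Nat.card O.orbit = Fintype.card Y := by
  simpa using (sum_comp_mk_cycles f 1).symm

theorem card_fixed_multisets_eq_card_solutions [Finite Y] (k : ℕ) :
    Nat.card {M : Multiset Y // Multiset.card M = k ∧ M.map f = M} =
      Nat.card {h : Cycles f → ℕ // ∑ O : Cycles f, Nat.card O.orbit * h O = k} := by
  classical
  have : Fintype Y := Fintype.ofFinite Y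
  let multiplicities : Multiset Y ≃ (Y → ℕ) :=
    Multiset.toFinsupp.toEquiv.trans Finsupp.equivFunOnFinite
  let lift : (Cycles f → ℕ) ≃ {g : Y → ℕ // g ∘ f = g} :=
    Equiv.ofBijective _ (bijective_comp_mk_cycles ℕ)
  have hcard (M : Multiset Y) : ∑ x, multiplicities M x = Multiset.card M :=
    Multiset.sum_count_eq_card fun _ _ ↦ mem_univ _
  calc Nat.card {M : Multiset Y // Multiset.card M = k ∧ M.map f = M}
    _ = Nat.card {g : Y → ℕ // g ∘ f = g ∧ ∑ x, g x = k} :=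
      Nat.card_congr <| multiplicities.subtypeEquiv fun M ↦ by
        rw [hcard, map_eq_self_iff_count_comp, and_comm]
        rfl
    _ = Nat.card {g : {g : Y → ℕ // g ∘ f = g} // ∑ x, g.1 x = k} :=
      Nat.card_congr (Equiv.subtypeSubtypeEquivSubtypeInter (fun g : Y → ℕ ↦ g ∘ f = g)
        fun g ↦ ∑ x, g x = k).symm
    _ = Nat.card {h : Cycles f → ℕ // ∑ O : Cycles f, Nat.card O.orbit * h O = k} :=
      Nat.card_congr <| .symm <| lift.subtypeEquiv fun h ↦ by
        rw [← sum_comp_mk_cycles]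
        rfl

end Cycles

section Sieving

variable {R Y : Type*} [CommRing R] [Finite Y]

theorem mk_card_fixed_multisets_mul_prod (f : Equiv.Perm Y) :
    PowerSeries.mk (fun k ↦
        (Nat.card {M : Multiset Y // Multiset.card M = k ∧ M.map f = M} : R)) *
      ∏ O : Cycles f, (1 - PowerSeries.X ^ Nat.card O.orbit) = 1 := by
  simp only [card_fixed_multisets_eq_card_solutions]
  exact mk_card_solutions_mul_prod (card_orbit_ne_zero f)

theorem evalRoots_eq_card_fixed_multisets {f : Equiv.Perm Y} {a b : R} {n k : ℕ}
    (hf : ∏ p ∈ antidiagonal n, (1 - PowerSeries.C (a ^ p.1 * b ^ p.2) * PowerSeries.X) =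
      ∏ O : Cycles f, (1 - PowerSeries.X ^ Nat.card O.orbit))
    {P : MvPolynomial (Fin 2) ℤ} (hP : P * gfibFact k * gfibFact n = gfibFact (n + k)) :
    evalRoots a b P =
      (Nat.card {M : Multiset Y // Multiset.card M = k ∧ M.map f = M} : R) := by
  have hfixed := mk_card_fixed_multisets_mul_prod (R := R) f
  rw [← hf, mul_comm] at hfixed
  have hseries := left_inv_eq_right_inv (hsymmSeries_mul_prod_one_sub a b n) hfixed
  rw [evalRoots_eq_coeff_hsymmSeries hP, hseries, PowerSeries.coeff_mk]

end Sieving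

section Rotation

theorem minimalPeriod_addRight {G : Type*} [AddGroup G] (c x : G) :
    Function.minimalPeriod (Equiv.addRight c) x = addOrderOf c := by
  refine Function.minimalPeriod_eq_minimalPeriod_iff.mpr fun m ↦ ?_
  simp [Function.IsPeriodicPt, Function.IsFixedPt]

theorem prod_cycles_addRight (R : Type*) [CommRing R] {G : Type*} [AddGroup G] [Fintype G] (c : G) :
    ∏ O : Cycles (Equiv.addRight c), (1 - PowerSeries.X ^ Nat.card O.orbit : R⟦X⟧) =
      (1 - PowerSeries.X ^ addOrderOf c) ^ (Fintype.card G / addOrderOf c) := by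
  have hsize (O : Cycles (Equiv.addRight c)) : Nat.card O.orbit = addOrderOf c := by
    induction O using Quotient.inductionOn' with
    | h x => rw [card_orbit_mk, minimalPeriod_addRight]
  have hcount : Fintype.card (Cycles (Equiv.addRight c)) * addOrderOf c = Fintype.card G := by
    rw [← sum_card_orbit_cycles (Equiv.addRight c)]
    simp only [hsize, sum_const, card_univ, smul_eq_mul]
  simp only [hsize, prod_const, card_univ]
  rw [← hcount, Nat.mul_div_cancel _ (addOrderOf_pos c)]

theorem prod_range_one_sub_pow_mul {A : Type*} [CommRing A] [IsDomain A] {p : A} {m : ℕ}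
    (hp : IsPrimitiveRoot p m) (hm : 0 < m) (w : A) :
    ∏ i ∈ range m, (1 - p ^ i * w) = 1 - w ^ m := by
  classical
  have hroots : Polynomial.nthRootsFinset m (1 : A) = (range m).image (p ^ ·) := by
    ext x
    rw [Polynomial.nthRootsFinset, Multiset.mem_toFinset, hp.nthRoots_eq (one_pow m)]
    simp
  rw [← one_pow m, hp.pow_sub_pow_eq_prod_sub_mul 1 w hm, hroots,
    prod_image fun i hi j hj ↦ hp.pow_inj (mem_range.mp hi) (mem_range.mp hj), one_pow]

theorem prod_range_mul_of_periodic {A : Type*} [CommMonoid A] {g : ℕ → A} {m : ℕ}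
    (hg : Function.Periodic g m) (d : ℕ) :
    ∏ i ∈ range (m * d), g i = (∏ i ∈ range m, g i) ^ d := by
  induction d with
  | zero => simp
  | succ d ih =>
    rw [Nat.mul_succ, prod_range_add, ih, pow_succ]
    congr 1
    exact prod_congr rfl fun i _ ↦ by simpa [add_comm, mul_comm] using hg.nat_mul d i

theorem prod_antidiagonal_rotation {K : Type*} [Field K] {q : K} {m n : ℕ}
    (hq : IsPrimitiveRoot q m) (hm : Odd m) (hmn : m ∣ n + 1) :
    ∏ p ∈ antidiagonal n, (1 - PowerSeries.C (q ^ p.1 * q⁻¹ ^ p.2) * PowerSeries.X) =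
      (1 - PowerSeries.X ^ m) ^ ((n + 1) / m) := by
  have hq₀ : q ≠ 0 := hq.ne_zero hm.pos.ne'
  have hsq : IsPrimitiveRoot (PowerSeries.C (q ^ 2)) m :=
    (hq.pow_of_coprime 2 hm.coprime_two_left).map_of_injective PowerSeries.C_injective
  have hfactor (i : ℕ) (hi : i ∈ range (n + 1)) :
      1 - PowerSeries.C (q ^ i * q⁻¹ ^ (n - i)) * PowerSeries.X =
        1 - PowerSeries.C (q ^ 2) ^ i * (PowerSeries.C (q⁻¹ ^ n) * PowerSeries.X) := by
    have hpow : q ^ i * q⁻¹ ^ (n - i) = (q ^ 2) ^ i * q⁻¹ ^ n := by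
      obtain ⟨j, rfl⟩ := Nat.exists_eq_add_of_le (mem_range_succ_iff.mp hi)
      rw [Nat.add_sub_cancel_left, inv_pow, inv_pow]
      field_simp
      ring
    rw [hpow, map_mul, map_pow, mul_assoc]
  have hw : (PowerSeries.C (q⁻¹ ^ n) * PowerSeries.X) ^ m = PowerSeries.X ^ m := by
    rw [mul_pow, ← map_pow, pow_right_comm, hq.inv.pow_eq_one, one_pow, map_one, one_mul]
  rw [Nat.prod_antidiagonal_eq_prod_range_succ_mk, prod_congr rfl hfactor]
  obtain ⟨d, hd⟩ := hmn
  rw [hd, Nat.mul_div_cancel_left _ hm.pos, prod_range_mul_of_periodic,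
    prod_range_one_sub_pow_mul hsq hm.pos, hw]
  intro i
  simp only [pow_add, hsq.pow_eq_one, mul_one]

theorem evalRoots_eq_card_fixed_translation {K G : Type*} [Field K] [AddGroup G] [Fintype G]
    (hG : Odd (Fintype.card G)) {c : G} {q : K} (hq : IsPrimitiveRoot q (addOrderOf c)) {n k : ℕ}
    (hn : Fintype.card G = n + 1) {P : MvPolynomial (Fin 2) ℤ}
    (hP : P * gfibFact k * gfibFact n = gfibFact (n + k)) :
    evalRoots q q⁻¹ P =
      (Nat.card {M : Multiset G // Multiset.card M = k ∧ M.map (· + c) = M} : K) := by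
  have hdvd : addOrderOf c ∣ Fintype.card G := addOrderOf_dvd_card
  refine evalRoots_eq_card_fixed_multisets (f := Equiv.addRight c) ?_ hP
  rw [prod_cycles_addRight, hn, prod_antidiagonal_rotation hq (hG.of_dvd_nat hdvd) (hn ▸ hdvd)]

end Rotation

section Reflection

theorem prod_antidiagonal_reflection (R : Type*) [CommRing R] (r : ℕ) :
    ∏ p ∈ antidiagonal (2 * r), (1 - PowerSeries.C ((-1 : R) ^ p.1 * 1 ^ p.2) * PowerSeries.X) =
      (1 - PowerSeries.X) * (1 - PowerSeries.X ^ 2) ^ r := by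
  have hperiodic : Function.Periodic
      (fun i ↦ 1 - PowerSeries.C ((-1 : R) ^ i) * PowerSeries.X) 2 := by
    intro i
    simp [pow_add]
  simp only [one_pow, mul_one]
  rw [Nat.prod_antidiagonal_eq_prod_range_succ_mk, prod_range_succ,
    prod_range_mul_of_periodic hperiodic]
  simp only [prod_range_succ, prod_range_zero, even_two, Even.mul_right, Even.neg_pow, one_pow,
    map_one, map_neg, pow_zero, pow_one]
  ring

theorem prod_cycles_involution (R : Type*) [CommRing R] {Y : Type*} [Fintype Y]
    {f : Equiv.Perm Y} (hf : Function.Involutive f) {x₀ : Y} (hx₀ : ∀ x, f x = x ↔ x = x₀) :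
    ∏ O : Cycles f, (1 - PowerSeries.X ^ Nat.card O.orbit : R⟦X⟧) =
      (1 - PowerSeries.X) * (1 - PowerSeries.X ^ 2) ^ (Fintype.card Y / 2) := by
  classical
  have hfixed : Nat.card (MulAction.orbitRel.Quotient.orbit (Quotient.mk'' x₀ : Cycles f)) = 1 := by
    rw [card_orbit_mk, Function.minimalPeriod_eq_one_iff_isFixedPt]
    exact (hx₀ x₀).mpr rfl
  have hmoved (O : Cycles f) (hO : O ∈ univ.erase (Quotient.mk'' x₀)) : Nat.card O.orbit = 2 := by
    induction O using Quotient.inductionOn' with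
    | h x =>
      have hper : Function.IsPeriodicPt f 2 x := hf x
      rw [card_orbit_mk, Function.minimalPeriod_eq_prime hper]
      intro hx
      exact ne_of_mem_erase hO (congrArg _ ((hx₀ x).mp hx))
  have hcount : 1 + #(univ.erase (Quotient.mk'' x₀ : Cycles f)) * 2 = Fintype.card Y := by
    rw [← sum_card_orbit_cycles f, ← add_sum_erase _ _ (mem_univ (Quotient.mk'' x₀)), hfixed,
      sum_congr rfl hmoved, sum_const, smul_eq_mul]
  rw [← mul_prod_erase _ _ (mem_univ (Quotient.mk'' x₀)), hfixed, pow_one,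
    prod_congr rfl fun O hO ↦ by rw [hmoved O hO], prod_const, ← hcount]
  congr 2
  omega

theorem evalRoots_eq_card_fixed_involution {R Y : Type*} [CommRing R] [Fintype Y]
    {f : Equiv.Perm Y} (hf : Function.Involutive f) {x₀ : Y} (hx₀ : ∀ x, f x = x ↔ x = x₀)
    {r k : ℕ} (hr : Fintype.card Y = 2 * r + 1) {P : MvPolynomial (Fin 2) ℤ}
    (hP : P * gfibFact k * gfibFact (2 * r) = gfibFact (2 * r + k)) :
    evalRoots (-1) 1 P =
      (Nat.card {M : Multiset Y // Multiset.card M = k ∧ M.map f = M} : R) := by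
  refine evalRoots_eq_card_fixed_multisets ?_ hP
  rw [prod_antidiagonal_reflection, prod_cycles_involution R hf hx₀, hr]
  congr 2
  omega

end Reflection

theorem zmod_sub_eq_self_iff {n : ℕ} (hn : Odd n) {j x : ZMod n} : j - x = x ↔ x = 2⁻¹ * j := by
  have htwo : (2 : ZMod n) * 2⁻¹ = 1 := by
    exact_mod_cast ZMod.coe_mul_inv_eq_one 2 hn.coprime_two_left
  constructor
  · intro h
    linear_combination (-2⁻¹ : ZMod n) * h - x * htwo
  · rintro rfl
    linear_combination -j * htwo

theorem isPrimitiveRoot_zpow_addOrderOf {K : Type*} [Field K] {ζ : K} {n : ℕ}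
    (hζ : IsPrimitiveRoot ζ n) (ℓ : ℤ) : IsPrimitiveRoot (ζ ^ ℓ) (addOrderOf (ℓ : ZMod n)) := by
  have hpow (i : ℕ) : (ζ ^ ℓ) ^ i = 1 ↔ addOrderOf (ℓ : ZMod n) ∣ i := by
    rw [← zpow_natCast, ← zpow_mul, hζ.zpow_eq_one_iff_dvd, addOrderOf_dvd_iff_nsmul_eq_zero,
      ← ZMod.intCast_zmod_eq_zero_iff_dvd, nsmul_eq_mul, mul_comm]
    push_cast
    rfl
  exact ⟨(hpow _).mpr dvd_rfl, fun i ↦ (hpow i).mp⟩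

theorem dihedral_sieving_kmultisubsets_general {K : Type*} [Field K] {n k : ℕ} (hn : Odd n)
    {ζ : K} (hζ : IsPrimitiveRoot ζ n) {P : MvPolynomial (Fin 2) ℤ}
    (hP : P * gfibFact k * gfibFact (n - 1) = gfibFact (n + k - 1)) :
    (∀ ℓ : ℤ,
      aeval ![ζ ^ ℓ + ζ ^ (-ℓ), (-1 : K)] P
        = (Nat.card {M : Multiset (ZMod n) //
            Multiset.card M = k ∧ M.map (fun x => x + (ℓ : ZMod n)) = M} : K)) ∧
    ∀ j : ZMod n,
      aeval ![(0 : K), 1] P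
        = (Nat.card {M : Multiset (ZMod n) //
            Multiset.card M = k ∧ M.map (fun x => j - x) = M} : K) := by
  have : NeZero n := ⟨hn.pos.ne'⟩
  obtain ⟨r, hr⟩ := hn
  have hcard : Fintype.card (ZMod n) = 2 * r + 1 := (ZMod.card n).trans hr
  rw [show n - 1 = 2 * r by omega, show n + k - 1 = 2 * r + k by omega] at hP
  refine ⟨fun ℓ ↦ ?_, fun j ↦ ?_⟩
  · rw [← evalRoots_eq_card_fixed_translation ⟨r, hcard⟩
      (isPrimitiveRoot_zpow_addOrderOf hζ ℓ) hcard hP, evalRoots, zpow_neg,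
      mul_inv_cancel₀ (zpow_ne_zero ℓ (hζ.ne_zero (NeZero.ne n)))]
  · have hfixed (x : ZMod n) : Equiv.subLeft j x = x ↔ x = 2⁻¹ * j := zmod_sub_eq_self_iff ⟨r, hr⟩
    have hspecial : evalRoots (-1 : K) 1 P = aeval ![(0 : K), 1] P := by simp [evalRoots]
    rw [← hspecial, evalRoots_eq_card_fixed_involution (f := Equiv.subLeft j)
      (sub_sub_cancel j) hfixed hcard hP]
    rfl

/-- Dihedral sieving for `k`-multisubsets of `ℤ/nℤ`, `n` odd: the Fibonomial polynomial
`P` of type `(n+k-1, k)` evaluated at `(ζ^ℓ + ζ^{-ℓ}, -1)` counts the multisets of size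
`k` fixed by the rotation `x ↦ x + ℓ`, and `P(0,1)` counts those fixed by the
reflection `x ↦ -x`. -/
theorem dihedral_sieving_kmultisubsets (n k : ℕ) (hn : Odd n)
    (P : MvPolynomial (Fin 2) ℤ)
    (hP : P * gfibFact k * gfibFact (n - 1) = gfibFact (n + k - 1)) :
    (∀ ℓ : ℤ,
      aeval ![primRoot n ^ ℓ + primRoot n ^ (-ℓ), (-1 : ℂ)] P
        = (Nat.card {M : Multiset (ZMod n) //
            Multiset.card M = k ∧ M.map (fun x => x + (ℓ : ZMod n)) = M} : ℂ)) ∧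
    aeval ![(0 : ℂ), 1] P
      = (Nat.card {M : Multiset (ZMod n) //
          Multiset.card M = k ∧ M.map (fun x => -x) = M} : ℂ) := by
  obtain ⟨hrotation, hreflection⟩ := dihedral_sieving_kmultisubsets_general hn
    (Complex.isPrimitiveRoot_exp n hn.pos.ne') hP
  exact ⟨hrotation, by simpa only [zero_sub] using hreflection 0⟩
end

section
/- For 0 ≤ k ≤ n−1, the product {n}_{s,t}·{k}!_{s,t}·{n−k}!_{s,t}·{k+1}!_{s,t}·{n−k−1}!_{s,t} divides {n}!_{s,t}·{n}!_{s,t} in ℤ[s,t]; that is, the (s,t)-Narayana number (1/{n}_{s,t})·{n choose k}_{s,t}·{n choose k+1}_{s,t} is a polynomial in s and t with integer coefficients. -/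
/-!
Put `n = k + m + 1` and let `A = {n choose k}`, `B = {n choose k + 1}`. By absorption `{n}` divides
both `{m + 1} A` and `{k + 1} B`. Since `{n + 1} = t {k} {m + 1} + {k + 1} {m + 2}`, it follows that
`{n}` divides `{n + 1} A B`, and consecutive generalized Fibonacci polynomials have no common
factor: a common factor of `{n}` and `{n + 1} = s {n} + t {n - 1}` divides `t {n - 1}`, and `t` is
prime to `{n}`, whose value at `(s, t) = (1, 0)` is `1`. Hence `{n}` divides `A B`.
-/

open MvPolynomial

theorem gfib_add_two (n : ℕ) : gfib (n + 2) = X 0 * gfib (n + 1) + X 1 * gfib n := rfl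

theorem gfibFact_succ (n : ℕ) : gfibFact (n + 1) = gfib (n + 1) * gfibFact n := rfl

theorem gfib_add (m n : ℕ) :
    gfib (m + n + 1) = X 1 * gfib m * gfib n + gfib (m + 1) * gfib (n + 1) := by
  induction n generalizing m with
  | zero => simp [gfib]
  | succ n ih =>
    rw [← add_assoc, add_right_comm m n 1, ih, gfib_add_two, gfib_add_two]
    ring

theorem eval_gfib_succ (s : ℤ) (n : ℕ) : eval ![s, 0] (gfib (n + 1)) = s ^ n := by
  induction n with
  | zero => simp [gfib]
  | succ n ih => simp [gfib_add_two, ih, pow_succ']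

theorem gfib_succ_ne_zero (n : ℕ) : gfib (n + 1) ≠ 0 := by
  intro h
  simpa [h] using eval_gfib_succ 1 n

theorem gfibFact_ne_zero (n : ℕ) : gfibFact n ≠ 0 := by
  induction n with
  | zero => exact one_ne_zero
  | succ n ih => exact mul_ne_zero (gfib_succ_ne_zero n) ih

theorem isRelPrime_X_one_gfib_succ (n : ℕ) : IsRelPrime (X 1) (gfib (n + 1)) := by
  rw [(X_prime (R := ℤ)).irreducible.isRelPrime_iff_not_dvd]
  rintro ⟨q, hq⟩
  simpa [hq] using eval_gfib_succ 1 n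

theorem isRelPrime_gfib_gfib_succ (n : ℕ) : IsRelPrime (gfib n) (gfib (n + 1)) := by
  induction n with
  | zero => exact isRelPrime_one_right
  | succ n ih =>
    rw [gfib_add_two, IsRelPrime.mul_add_right_right_iff]
    exact (isRelPrime_X_one_gfib_succ n).symm.mul_right ih.symm

/-- The Fibonomial coefficient `{a + b choose a}_{s,t}`. Indexing by the two complementary parts
`a` and `b` avoids subtraction, and the Pascal-type recurrence keeps it in `ℤ[s,t]`. -/
noncomputable def fibonomial : ℕ → ℕ → MvPolynomial (Fin 2) ℤ
  | _, 0 => 1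
  | 0, _ + 1 => 1
  | a + 1, b + 1 =>
      X 1 * gfib a * fibonomial (a + 1) b + gfib (b + 2) * fibonomial a (b + 1)

theorem fibonomial_mul_gfibFact_mul_gfibFact (a b : ℕ) :
    fibonomial a b * gfibFact a * gfibFact b = gfibFact (a + b) := by
  induction a, b using fibonomial.induct with
  | case1 a => simp [fibonomial, gfibFact]
  | case2 b => simp [fibonomial, gfibFact]
  | case3 a b ihb iha =>
    have hb : fibonomial (a + 1) b * gfibFact (a + 1) * gfibFact b = gfibFact (a + b + 1) := by
      rw [ihb, add_right_comm]
    have ha : fibonomial a (b + 1) * gfibFact a * gfibFact (b + 1) = gfibFact (a + b + 1) := iha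
    calc
      fibonomial (a + 1) (b + 1) * gfibFact (a + 1) * gfibFact (b + 1)
        = X 1 * gfib a * gfib (b + 1) * (fibonomial (a + 1) b * gfibFact (a + 1) * gfibFact b)
          + gfib (a + 1) * gfib (b + 2) *
            (fibonomial a (b + 1) * gfibFact a * gfibFact (b + 1)) := by
        rw [fibonomial, gfibFact_succ a, gfibFact_succ b]
        ring
      _ = gfib (a + (b + 1) + 1) * gfibFact (a + b + 1) := by
        rw [hb, ha, gfib_add a (b + 1)]
        ring
      _ = gfibFact (a + 1 + (b + 1)) := by
        rw [add_right_comm a 1, gfibFact_succ (a + (b + 1)), ← add_assoc a b 1]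

theorem fibonomial_comm (a b : ℕ) : fibonomial a b = fibonomial b a := by
  apply mul_right_cancel₀ (mul_ne_zero (gfibFact_ne_zero a) (gfibFact_ne_zero b))
  rw [← mul_assoc, fibonomial_mul_gfibFact_mul_gfibFact, mul_comm (gfibFact a), ← mul_assoc,
    fibonomial_mul_gfibFact_mul_gfibFact, add_comm]

theorem fibonomial_succ_left_mul_gfib (a b : ℕ) :
    fibonomial (a + 1) b * gfib (a + 1) = gfib (a + b + 1) * fibonomial a b := by
  apply mul_right_cancel₀ (mul_ne_zero (gfibFact_ne_zero a) (gfibFact_ne_zero b))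
  calc
    fibonomial (a + 1) b * gfib (a + 1) * (gfibFact a * gfibFact b)
      = fibonomial (a + 1) b * gfibFact (a + 1) * gfibFact b := by
      rw [gfibFact_succ]
      ring
    _ = gfib (a + b + 1) * gfibFact (a + b) := by
      rw [fibonomial_mul_gfibFact_mul_gfibFact, add_right_comm, gfibFact_succ]
    _ = gfib (a + b + 1) * fibonomial a b * (gfibFact a * gfibFact b) := by
      rw [← fibonomial_mul_gfibFact_mul_gfibFact]
      ring

theorem fibonomial_succ_right_mul_gfib (a b : ℕ) :
    fibonomial a (b + 1) * gfib (b + 1) = gfib (a + b + 1) * fibonomial a b := by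
  rw [fibonomial_comm, fibonomial_succ_left_mul_gfib, fibonomial_comm, add_comm b]

theorem gfib_dvd_fibonomial_mul_fibonomial (a b : ℕ) :
    gfib (a + b + 1) ∣ fibonomial a (b + 1) * fibonomial (a + 1) b := by
  have hleft : gfib (a + b + 1) ∣ fibonomial (a + 1) b * gfib (a + 1) :=
    ⟨_, fibonomial_succ_left_mul_gfib a b⟩
  have hright : gfib (a + b + 1) ∣ fibonomial a (b + 1) * gfib (b + 1) :=
    ⟨_, fibonomial_succ_right_mul_gfib a b⟩
  apply (isRelPrime_gfib_gfib_succ (a + b + 1)).dvd_of_dvd_mul_left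
  have hexpand : gfib (a + b + 1 + 1) * (fibonomial a (b + 1) * fibonomial (a + 1) b) =
      fibonomial a (b + 1) * gfib (b + 1) * (X 1 * gfib a * fibonomial (a + 1) b) +
        fibonomial (a + 1) b * gfib (a + 1) * (gfib (b + 2) * fibonomial a (b + 1)) := by
    rw [add_assoc a b 1, gfib_add]
    ring
  rw [hexpand]
  exact dvd_add (hright.mul_right _) (hleft.mul_right _)

/-- The `(s,t)`-Narayana number is a polynomial: for `0 ≤ k ≤ n - 1`,
`{n}·{k}!·{n-k}!·{k+1}!·{n-k-1}!` divides `{n}!·{n}!` in `ℤ[s,t]`. -/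
theorem narayana_is_polynomial (n k : ℕ) (hk : k < n) :
    (gfib n * gfibFact k * gfibFact (n - k) * gfibFact (k + 1) * gfibFact (n - k - 1)) ∣
      (gfibFact n * gfibFact n) := by
  obtain ⟨m, rfl⟩ : ∃ m, n = k + m + 1 := Nat.exists_eq_add_of_lt hk
  have hsub : k + m + 1 - k = m + 1 := by omega
  rw [hsub, Nat.add_sub_cancel]
  have hk_fact := fibonomial_mul_gfibFact_mul_gfibFact k (m + 1)
  have hk_succ_fact := fibonomial_mul_gfibFact_mul_gfibFact (k + 1) m
  rw [← add_assoc] at hk_fact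
  rw [add_right_comm] at hk_succ_fact
  calc
    gfib (k + m + 1) * gfibFact k * gfibFact (m + 1) * gfibFact (k + 1) * gfibFact m
      = gfib (k + m + 1) *
          (gfibFact k * gfibFact (m + 1) * gfibFact (k + 1) * gfibFact m) := by ring
    _ ∣ fibonomial k (m + 1) * fibonomial (k + 1) m *
          (gfibFact k * gfibFact (m + 1) * gfibFact (k + 1) * gfibFact m) :=
      mul_dvd_mul_right (gfib_dvd_fibonomial_mul_fibonomial k m) _
    _ = (fibonomial k (m + 1) * gfibFact k * gfibFact (m + 1)) *
          (fibonomial (k + 1) m * gfibFact (k + 1) * gfibFact m) := by ring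
    _ = gfibFact (k + m + 1) * gfibFact (k + m + 1) := by rw [hk_fact, hk_succ_fact]
end

section
/- Let C̃_n(q) ∈ ℤ[q] be the Carlitz–Riordan q-Catalan polynomials. Then for every k ≥ 1, (−1)^{binom(2k−1, 2)} · C̃_{2k−1}(−1) = C_{k−1}, where C_{k−1} is the ordinary (k−1)-st Catalan number. -/
/-- The Carlitz–Riordan q-Catalan polynomials, defined by `C̃_0(q) = 1` and
`C̃_{n+1}(q) = ∑_{k=0}^{n} q^k C̃_k(q) C̃_{n-k}(q)`. -/
noncomputable def crCatalan : ℕ → Polynomial ℤ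
  | 0 => 1
  | (n + 1) =>
    ∑ k ∈ (Finset.range (n + 1)).attach,
      Polynomial.X ^ (k : ℕ) * crCatalan k * crCatalan (n - (k : ℕ))
decreasing_by
  · exact Nat.lt_succ_of_le (Nat.le_of_lt_succ (Finset.mem_range.mp k.2))
  · exact Nat.lt_succ_of_le (Nat.sub_le n k)

/-!
Write `a n` for the value of `C̃_n` at `-1`, so that `a (n + 1)` is the sum of
`(-1) ^ i * a i * a j` over `i + j = n`. For odd `n` the terms at `(i, j)` and `(j, i)` cancel, so
`a` vanishes at all positive even indices. Hence in the recurrence for `a (2 * m + 3)` only the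
terms with `i` and `j` odd survive, and up to sign this is the Catalan recurrence.
-/

open Finset

theorem choose_two_mul_add_one_two (m : ℕ) : (2 * m + 1).choose 2 = (2 * m + 1) * m := by
  rw [Nat.choose_two_right, Nat.add_sub_cancel, mul_left_comm, Nat.mul_div_cancel_left _ two_pos]

theorem sum_antidiagonal_two_mul_add_two {M : Type*} [AddCommMonoid M] (f : ℕ × ℕ → M) (m : ℕ) :
    ∑ p ∈ antidiagonal (2 * m + 2), f p =
      ∑ p ∈ antidiagonal (m + 1), f (2 * p.1, 2 * p.2) +
        ∑ p ∈ antidiagonal m, f (2 * p.1 + 1, 2 * p.2 + 1) := by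
  induction m generalizing f with
  | zero => simp [Nat.sum_antidiagonal_succ, add_comm, add_left_comm]
  | succ m ih =>
    calc ∑ p ∈ antidiagonal (2 * (m + 1) + 2), f p
      _ = f (0, 2 * (m + 2)) + (f (1, 2 * (m + 1) + 1) +
            ∑ p ∈ antidiagonal (2 * m + 2), f (p.1 + 2, p.2)) := by
        rw [Nat.sum_antidiagonal_succ, Nat.sum_antidiagonal_succ]
        rfl
      _ = (f (0, 2 * (m + 2)) + ∑ p ∈ antidiagonal (m + 1), f (2 * (p.1 + 1), 2 * p.2)) +
            (f (1, 2 * (m + 1) + 1) +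
              ∑ p ∈ antidiagonal m, f (2 * (p.1 + 1) + 1, 2 * p.2 + 1)) := by
        rw [ih, add_left_comm (f (1, _)), ← add_assoc]
        rfl
      _ = ∑ p ∈ antidiagonal (m + 1 + 1), f (2 * p.1, 2 * p.2) +
            ∑ p ∈ antidiagonal (m + 1), f (2 * p.1 + 1, 2 * p.2 + 1) := by
        rw [Nat.sum_antidiagonal_succ (f := fun p ↦ f (2 * p.1, 2 * p.2)),
          Nat.sum_antidiagonal_succ (f := fun p ↦ f (2 * p.1 + 1, 2 * p.2 + 1))]
        rfl

theorem sum_antidiagonal_neg_one_pow_mul_mul_of_odd {R : Type*} [CommRing R] (a : ℕ → R)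
    {n : ℕ} (hn : Odd n) : ∑ p ∈ antidiagonal n, (-1) ^ p.1 * a p.1 * a p.2 = 0 := by
  refine sum_involution (fun p _ ↦ p.swap) ?_ ?_
    (fun _ hp ↦ HasAntidiagonal.swap_mem_antidiagonal.2 hp) (fun p _ ↦ p.swap_swap)
  · rintro ⟨i, j⟩ hij
    have opposite_sign : (-1 : R) ^ j = -(-1) ^ i := by
      rw [← HasAntidiagonal.mem_antidiagonal.1 hij] at hn
      rcases Nat.even_or_odd i with hi | hi
      · rw [hi.neg_one_pow, (Nat.odd_add'.1 hn |>.2 hi).neg_one_pow]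
      · rw [hi.neg_one_pow, (Nat.odd_add.1 hn |>.1 hi).neg_one_pow, neg_neg]
    simp only [Prod.fst_swap, Prod.snd_swap, opposite_sign]
    ring
  · rintro ⟨i, j⟩ hij - hswap
    obtain rfl : j = i := congrArg Prod.fst hswap
    exact Nat.not_even_iff_odd.2 hn ⟨j, (HasAntidiagonal.mem_antidiagonal.1 hij).symm⟩

theorem crCatalan_zero : crCatalan 0 = 1 := by
  rw [crCatalan]

theorem crCatalan_succ (n : ℕ) :
    crCatalan (n + 1) =
      ∑ p ∈ antidiagonal n, Polynomial.X ^ p.1 * crCatalan p.1 * crCatalan p.2 := by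
  rw [crCatalan, sum_attach (range (n + 1))
    (fun k ↦ Polynomial.X ^ k * crCatalan k * crCatalan (n - k)),
    Nat.sum_antidiagonal_eq_sum_range_succ
      (fun i j ↦ Polynomial.X ^ i * crCatalan i * crCatalan j)]

theorem eval_crCatalan_succ (x : ℤ) (n : ℕ) :
    (crCatalan (n + 1)).eval x =
      ∑ p ∈ antidiagonal n, x ^ p.1 * (crCatalan p.1).eval x * (crCatalan p.2).eval x := by
  simp only [crCatalan_succ, Polynomial.eval_finsetSum, Polynomial.eval_mul, Polynomial.eval_pow,
    Polynomial.eval_X]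

theorem eval_neg_one_crCatalan_of_even {n : ℕ} (hn : Even n) (hn₀ : n ≠ 0) :
    (crCatalan n).eval (-1) = 0 := by
  obtain ⟨m, rfl⟩ := Nat.exists_eq_succ_of_ne_zero hn₀
  rw [Nat.succ_eq_add_one, eval_crCatalan_succ]
  refine sum_antidiagonal_neg_one_pow_mul_mul_of_odd (fun i ↦ (crCatalan i).eval (-1)) ?_
  exact Nat.not_even_iff_odd.1 (Nat.even_add_one.1 hn)

theorem eval_neg_one_crCatalan_two_mul_add_three (m : ℕ) :
    (crCatalan (2 * m + 3)).eval (-1) =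
      -∑ p ∈ antidiagonal m,
        (crCatalan (2 * p.1 + 1)).eval (-1) * (crCatalan (2 * p.2 + 1)).eval (-1) := by
  have even_terms : ∀ p ∈ antidiagonal (m + 1),
      (-1) ^ (2 * p.1) * (crCatalan (2 * p.1)).eval (-1) * (crCatalan (2 * p.2)).eval (-1) = 0 := by
    rintro ⟨i, j⟩ hij
    rw [HasAntidiagonal.mem_antidiagonal] at hij
    rcases Nat.eq_zero_or_pos i with rfl | hi
    · rw [eval_neg_one_crCatalan_of_even (even_two_mul j) (by lia), mul_zero]
    · rw [eval_neg_one_crCatalan_of_even (even_two_mul i) (by lia), mul_zero, zero_mul]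
  rw [eval_crCatalan_succ, sum_antidiagonal_two_mul_add_two, sum_eq_zero even_terms, zero_add,
    ← sum_neg_distrib]
  simp only [(odd_two_mul_add_one _).neg_one_pow, neg_mul, one_mul]

theorem eval_neg_one_crCatalan_two_mul_add_one (m : ℕ) :
    (crCatalan (2 * m + 1)).eval (-1) = (-1) ^ m * (catalan m : ℤ) := by
  induction m using Nat.strong_induction_on with
  | _ m ih =>
    cases m with
    | zero => simp [crCatalan_succ, crCatalan_zero]
    | succ m =>
      have odd_terms : ∀ p ∈ antidiagonal m,
          (crCatalan (2 * p.1 + 1)).eval (-1) * (crCatalan (2 * p.2 + 1)).eval (-1) =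
            (-1) ^ m * ((catalan p.1 : ℤ) * catalan p.2) := by
        rintro ⟨i, j⟩ hij
        obtain rfl := HasAntidiagonal.mem_antidiagonal.1 hij
        rw [ih i (by lia), ih j (by lia)]
        ring
      calc (crCatalan (2 * (m + 1) + 1)).eval (-1)
        _ = -∑ p ∈ antidiagonal m, (-1) ^ m * ((catalan p.1 : ℤ) * catalan p.2) := by
          rw [← sum_congr rfl odd_terms]
          exact eval_neg_one_crCatalan_two_mul_add_three m
        _ = (-1) ^ (m + 1) * (catalan (m + 1) : ℤ) := by
          rw [← mul_sum, catalan_succ', pow_succ]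
          push_cast
          ring

/-- For every `k ≥ 1`, `(-1)^{binom(2k-1,2)} C̃_{2k-1}(-1) = C_{k-1}`, the ordinary
`(k-1)`-st Catalan number. -/
theorem crCatalan_eval_neg_one_odd (k : ℕ) (hk : 1 ≤ k) :
    (-1 : ℤ) ^ ((2 * k - 1).choose 2) * Polynomial.eval (-1 : ℤ) (crCatalan (2 * k - 1))
      = (catalan (k - 1) : ℤ) := by
  obtain ⟨m, rfl⟩ := Nat.exists_eq_add_of_le' hk
  have sign : (-1 : ℤ) ^ ((2 * m + 1).choose 2) = (-1) ^ m := by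
    rw [choose_two_mul_add_one_two, pow_mul, (odd_two_mul_add_one m).neg_one_pow]
  rw [show 2 * (m + 1) - 1 = 2 * m + 1 by lia, Nat.add_sub_cancel, sign,
    eval_neg_one_crCatalan_two_mul_add_one, ← mul_assoc, ← mul_pow, neg_one_mul, neg_neg, one_pow,
    one_mul]
end
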